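/- arXiv:2105.07222 — 3 statements merged into one kernel-verified Lean document; each statement's English description precedes it below -/
import Mathlib

section
/- Let m ≥ 2 and let X_1, …, X_m be i.i.d. standard normal random variables. Then the random variable T_m = X_m / sqrt((1/m) ∑_{i=1}^m X_i²) has probability density function f_m(x) = (1/√m) · Γ(m/2) / (Γ((m-1)/2) Γ(1/2)) · (1 - x²/m)^{(m-1)/2 - 1} for |x| < √m, and f_m(x) = 0 for |x| ≥ √m. -/
open MeasureTheory ProbabilityTheory

/-!
Write `T_m = √m * sin (arctan (Y / ‖Z‖))`, where `Y = X_m` and `Z = (X_1, …, X_{m-1})`. Conditioning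
on `Z` shows that `Y / ‖Z‖` has density `t ↦ E[‖Z‖ φ(t ‖Z‖)]`, with `φ` the density of `Y`. The
density of `Z` is radial, so this expectation is a Gamma integral in polar coordinates and is
proportional to `(1 + t²)^(-m/2)`. The map `t ↦ √m * sin (arctan t)` is a diffeomorphism of `ℝ` onto
`(-√m, √m)` with derivative `√m * (1 + t²)^(-3/2)`, and `1 - sin² (arctan t) = (1 + t²)⁻¹`, so it
carries this density to a multiple of `(1 - x²/m)^((m-3)/2)`.
-/

open Module Real Set
open scoped ENNReal NNReal

section ChangeOfVariables

lemma map_withDensity_abs_deriv_mul_comp {F F' : ℝ → ℝ} (hF : ∀ x, HasDerivAt F (F' x) x)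
    (hinj : F.Injective) (g : ℝ → ℝ≥0∞) :
    (volume.withDensity fun x => .ofReal |F' x| * g (F x)).map F =
      (volume.restrict (range F)).withDensity g := by
  have hF_meas : Measurable F :=
    (continuous_iff_continuousAt.2 fun x => (hF x).continuousAt).measurable
  ext s hs
  rw [Measure.map_apply hF_meas hs, withDensity_apply _ (hF_meas hs), withDensity_apply _ hs,
    Measure.restrict_restrict hs, ← image_preimage_eq_inter_range,
    lintegral_image_eq_lintegral_abs_deriv_mul (hF_meas hs)
      (fun x _ => (hF x).hasDerivWithinAt) hinj.injOn]

lemma map_div_const_withDensity {r : ℝ} (hr : r ≠ 0) (f : ℝ → ℝ≥0∞) :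
    (volume.withDensity f).map (· / r) = volume.withDensity fun t => .ofReal |r| * f (t * r) := by
  have hrange : range (· / r) = univ :=
    range_eq_univ.2 fun t => ⟨t * r, mul_div_cancel_right₀ t hr⟩
  have hdensity (y : ℝ) : f y = .ofReal |1 / r| * (.ofReal |r| * f (y / r * r)) := by
    rw [← mul_assoc, ← ENNReal.ofReal_mul (abs_nonneg _), ← abs_mul, one_div_mul_cancel hr,
      div_mul_cancel₀ y hr, abs_one, ENNReal.ofReal_one, one_mul]
  have hmap := map_withDensity_abs_deriv_mul_comp (fun y => (hasDerivAt_id' y).div_const r)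
    (fun _ _ => (div_left_inj' hr).1) fun t => .ofReal |r| * f (t * r)
  rwa [hrange, Measure.restrict_univ, ← funext hdensity] at hmap

lemma hasLaw_div_of_indepFun {Ω : Type*} [MeasurableSpace Ω] {P : Measure Ω}
    [IsFiniteMeasure P] {Y R : Ω → ℝ} {f : ℝ → ℝ≥0∞} (hf : Measurable f)
    (hY : HasLaw Y (volume.withDensity f) P) (hR : AEMeasurable R P) (hR₀ : ∀ᵐ ω ∂P, R ω ≠ 0)
    (hYR : Y ⟂ᵢ[P] R) :
    HasLaw (fun ω => Y ω / R ω)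
      (volume.withDensity fun t => ∫⁻ ω, .ofReal |R ω| * f (t * R ω) ∂P) P := by
  have hlaw := hYR.hasLaw_prod hY ⟨hR, rfl⟩
  have hdiv : Measurable fun p : ℝ × ℝ => p.1 / p.2 := by fun_prop
  have hR₀' : ∀ᵐ r ∂P.map R, r ≠ 0 := (ae_map_iff hR (measurableSet_singleton 0).compl).2 hR₀
  refine HasLaw.fun_comp (Y := fun p : ℝ × ℝ => p.1 / p.2) ⟨hdiv.aemeasurable, ?_⟩ hlaw
  ext s hs
  calc ((volume.withDensity f).prod (P.map R)).map (fun p => p.1 / p.2) s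
      = ∫⁻ r, (volume.withDensity f).map (· / r) s ∂P.map R := by
        rw [Measure.map_apply hdiv hs, Measure.prod_apply_symm (hdiv hs)]
        exact lintegral_congr fun r => (Measure.map_apply (by fun_prop) hs).symm
    _ = ∫⁻ r, (∫⁻ t in s, .ofReal |r| * f (t * r)) ∂P.map R := by
        refine lintegral_congr_ae (hR₀'.mono fun r hr => ?_)
        simp only [map_div_const_withDensity hr, withDensity_apply _ hs]
    _ = ∫⁻ t in s, ∫⁻ r, .ofReal |r| * f (t * r) ∂P.map R :=
        lintegral_lintegral_swap (by fun_prop)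
    _ = ∫⁻ t in s, ∫⁻ ω, .ofReal |R ω| * f (t * R ω) ∂P :=
        lintegral_congr fun t => lintegral_map' (by fun_prop) hR
    _ = _ := (withDensity_apply _ hs).symm

end ChangeOfVariables

lemma pi_withDensity_ofReal {ι : Type*} [Fintype ι] {α : ι → Type*}
    [∀ i, MeasurableSpace (α i)] {μ : ∀ i, Measure (α i)} [∀ i, SigmaFinite (μ i)]
    {f : ∀ i, α i → ℝ} (hf : ∀ i, Integrable (f i) (μ i)) (hf₀ : ∀ i x, 0 ≤ f i x) :
    Measure.pi (fun i => (μ i).withDensity fun x => .ofReal (f i x)) =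
      (Measure.pi μ).withDensity fun x => .ofReal (∏ i, f i (x i)) := by
  have (i : ι) : IsFiniteMeasure ((μ i).withDensity fun x => .ofReal (f i x)) :=
    isFiniteMeasure_withDensity_ofReal (hf i).2
  refine Measure.pi_eq fun s hs => ?_
  calc ((Measure.pi μ).withDensity fun x => .ofReal (∏ i, f i (x i))) (univ.pi s)
      = .ofReal (∫ x, ∏ i, f i (x i) ∂Measure.pi fun i => (μ i).restrict (s i)) := by
        rw [withDensity_apply _ (.univ_pi hs), Measure.restrict_pi_pi,
          ofReal_integral_eq_lintegral_ofReal (.fintype_prod_dep fun i => (hf i).restrict)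
            (.of_forall fun x => Finset.prod_nonneg fun i _ => hf₀ i (x i))]
    _ = ∏ i, .ofReal (∫ x in s i, f i x ∂μ i) := by
        rw [integral_fintype_prod_eq_prod,
          ENNReal.ofReal_prod_of_nonneg fun i _ => integral_nonneg (hf₀ i)]
    _ = ∏ i, ((μ i).withDensity fun x => .ofReal (f i x)) (s i) := by
        refine Finset.prod_congr rfl fun i _ => ?_
        rw [withDensity_apply _ (hs i),
          ofReal_integral_eq_lintegral_ofReal (hf i).restrict (.of_forall (hf₀ i))]

section IsotropicGaussian

variable {E : Type*} [NormedAddCommGroup E] [NormedSpace ℝ E]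

/-- The density at `x : E` of the centred Gaussian measure on a Euclidean space `E` with covariance
`v • id`, with respect to the volume. -/
noncomputable def isotropicGaussianPDFReal (v : ℝ≥0) (x : E) : ℝ :=
  (√(2 * π * v))⁻¹ ^ finrank ℝ E * exp (-‖x‖ ^ 2 / (2 * v))

lemma isotropicGaussianPDFReal_nonneg (v : ℝ≥0) (x : E) :
    0 ≤ isotropicGaussianPDFReal v x := by
  unfold isotropicGaussianPDFReal
  positivity

lemma measurable_isotropicGaussianPDFReal [MeasurableSpace E] [BorelSpace E] (v : ℝ≥0) :
    Measurable (isotropicGaussianPDFReal v : E → ℝ) := by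
  unfold isotropicGaussianPDFReal
  fun_prop

lemma norm_mul_gaussianPDFReal_mul_isotropicGaussianPDFReal (v : ℝ≥0) (t : ℝ) (x : E) :
    ‖x‖ * gaussianPDFReal 0 v (t * ‖x‖) * isotropicGaussianPDFReal v x =
      (√(2 * π * v))⁻¹ ^ (finrank ℝ E + 1) *
        (‖x‖ ^ (1 : ℝ) * exp (-((1 + t ^ 2) / (2 * v)) * ‖x‖ ^ 2)) := by
  have hexp : -((1 + t ^ 2) / (2 * v)) * ‖x‖ ^ 2 =
      -(t * ‖x‖ - 0) ^ 2 / (2 * v) + -‖x‖ ^ 2 / (2 * v) := by ring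
  rw [hexp, exp_add, rpow_one, gaussianPDFReal, isotropicGaussianPDFReal]
  ring

lemma prod_gaussianPDFReal_zero {ι : Type*} [Fintype ι] (v : ℝ≥0) (x : ι → ℝ) :
    ∏ i, gaussianPDFReal 0 v (x i) = isotropicGaussianPDFReal v (WithLp.toLp 2 x) := by
  simp only [gaussianPDFReal, isotropicGaussianPDFReal, sub_zero, Finset.prod_mul_distrib,
    Finset.prod_const, Finset.card_univ, ← exp_sum, finrank_euclideanSpace,
    EuclideanSpace.real_norm_sq_eq, ← Finset.sum_div, Finset.sum_neg_distrib]

lemma hasLaw_toLp_of_iIndepFun_gaussianReal {Ω ι : Type*} [MeasurableSpace Ω] {P : Measure Ω}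
    [Fintype ι] {v : ℝ≥0} (hv : v ≠ 0) {X : ι → Ω → ℝ}
    (hX : ∀ i, HasLaw (X i) (gaussianReal 0 v) P) (hindep : iIndepFun X P) :
    HasLaw (fun ω => WithLp.toLp 2 fun i => X i ω)
      ((volume : Measure (EuclideanSpace ℝ ι)).withDensity fun x =>
        .ofReal (isotropicGaussianPDFReal v x)) P := by
  refine HasLaw.fun_comp (Y := WithLp.toLp 2) ⟨by fun_prop, ?_⟩ (hindep.hasLaw_pi hX)
  have htoLp := PiLp.volume_preserving_toLp ι
  ext s hs
  simp only [gaussianReal_of_var_ne_zero 0 hv, gaussianPDF_def]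
  rw [pi_withDensity_ofReal (fun _ => integrable_gaussianPDFReal 0 v)
      (fun _ => gaussianPDFReal_nonneg 0 v), Measure.map_apply htoLp.measurable hs,
    withDensity_apply _ (htoLp.measurable hs), withDensity_apply _ hs,
    ← htoLp.setLIntegral_comp_preimage hs
      (measurable_isotropicGaussianPDFReal v).ennreal_ofReal]
  simp only [prod_gaussianPDFReal_zero]
  rfl

end IsotropicGaussian

section RadialIntegral

variable {E : Type*} [NormedAddCommGroup E] [InnerProductSpace ℝ E] [FiniteDimensional ℝ E]
  [MeasurableSpace E] [BorelSpace E] [Nontrivial E] {b p : ℝ}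

lemma eqOn_pow_smul_rpow_mul_exp {n : ℕ} (hn : 0 < n) (b p : ℝ) :
    EqOn (fun r : ℝ => r ^ (n - 1) • (r ^ p * exp (-b * r ^ 2)))
      (fun r => r ^ (n + p - 1) * exp (-b * r ^ (2 : ℝ))) (Ioi 0) := by
  intro r hr
  simp only [smul_eq_mul]
  rw [← mul_assoc, ← rpow_natCast, ← rpow_add hr, rpow_two, Nat.cast_pred hn]
  ring_nf

lemma integrable_norm_rpow_mul_exp_neg_mul_sq (hb : 0 < b) (hp : -(finrank ℝ E : ℝ) < p) :
    Integrable fun x : E => ‖x‖ ^ p * exp (-b * ‖x‖ ^ 2) := by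
  rw [integrable_fun_norm_addHaar volume (f := fun r => r ^ p * exp (-b * r ^ 2)),
    integrableOn_congr_fun (eqOn_pow_smul_rpow_mul_exp finrank_pos b p) measurableSet_Ioi]
  exact integrableOn_rpow_mul_exp_neg_mul_rpow (by linarith) two_pos hb

lemma finrank_mul_volume_real_unitBall :
    finrank ℝ E * volume.real (Metric.ball (0 : E) 1) =
      2 * √π ^ finrank ℝ E / Gamma (finrank ℝ E / 2) := by
  have hn : (0 : ℝ) < finrank ℝ E := mod_cast finrank_pos
  have : 0 < Gamma (finrank ℝ E / 2 : ℝ) := Gamma_pos_of_pos (by positivity)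
  rw [Measure.real, InnerProductSpace.volume_ball, ENNReal.ofReal_one, one_pow, one_mul,
    Gamma_add_one (by positivity), ENNReal.toReal_ofReal (by positivity)]
  field_simp

lemma integral_norm_rpow_mul_exp_neg_mul_sq (hb : 0 < b) (hp : -(finrank ℝ E : ℝ) < p) :
    ∫ x : E, ‖x‖ ^ p * exp (-b * ‖x‖ ^ 2) =
      √π ^ finrank ℝ E * (Gamma ((finrank ℝ E + p) / 2) / Gamma (finrank ℝ E / 2)) *
        b ^ (-((finrank ℝ E + p) / 2)) := by
  rw [integral_fun_norm_addHaar volume (fun r => r ^ p * exp (-b * r ^ 2)),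
    setIntegral_congr_fun measurableSet_Ioi (eqOn_pow_smul_rpow_mul_exp finrank_pos b p),
    integral_rpow_mul_exp_neg_mul_rpow two_pos (by linarith) hb, nsmul_eq_mul, smul_eq_mul,
    ← mul_assoc, finrank_mul_volume_real_unitBall, sub_add_cancel, neg_div]
  ring

end RadialIntegral

section GaussianRatio

/-- The density of `Y / ‖Z‖` for independent centred Gaussians `Y` in `ℝ` and `Z` in `ℝⁿ` with the
same variance; `√n * (Y / ‖Z‖)` is Student's `t` with `n` degrees of freedom. -/
noncomputable def gaussianRatioPDFReal (n : ℕ) (t : ℝ) : ℝ :=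
  Gamma ((n + 1) / 2) / (Gamma (n / 2) * Gamma (1 / 2)) * (1 + t ^ 2) ^ (-((n + 1 : ℝ) / 2))

variable {E : Type*} [NormedAddCommGroup E] [InnerProductSpace ℝ E] [FiniteDimensional ℝ E]
  [MeasurableSpace E] [BorelSpace E] [Nontrivial E] {v : ℝ≥0}

lemma integral_norm_mul_gaussianPDFReal_mul_isotropicGaussianPDFReal (hv : v ≠ 0) (t : ℝ) :
    ∫ x : E, ‖x‖ * gaussianPDFReal 0 v (t * ‖x‖) * isotropicGaussianPDFReal v x =
      gaussianRatioPDFReal (finrank ℝ E) t := by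
  have : (0 : ℝ) < v := NNReal.coe_pos.2 (pos_iff_ne_zero.2 hv)
  set n := finrank ℝ E with hn
  have hscale : (√(2 * π * v))⁻¹ ^ (n + 1) =
      (√π ^ (n + 1))⁻¹ * (2 * v) ^ (-((n + 1 : ℝ) / 2)) := by
    rw [mul_right_comm, sqrt_mul (by positivity), mul_comm (√_), mul_inv, mul_pow, inv_pow,
      inv_pow, rpow_neg (by positivity), sqrt_eq_rpow (2 * v), ← rpow_mul_natCast (by positivity)]
    push_cast
    ring_nf
  simp only [norm_mul_gaussianPDFReal_mul_isotropicGaussianPDFReal, integral_const_mul]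
  rw [integral_norm_rpow_mul_exp_neg_mul_sq (by positivity) (by linarith), ← hn,
    div_rpow (by positivity) (by positivity), hscale, gaussianRatioPDFReal, Gamma_one_half_eq,
    pow_succ]
  field_simp

lemma lintegral_norm_mul_gaussianPDF_isotropicGaussian (hv : v ≠ 0) (t : ℝ) :
    ∫⁻ x : E, .ofReal |‖x‖| * gaussianPDF 0 v (t * ‖x‖)
        ∂volume.withDensity (fun x => .ofReal (isotropicGaussianPDFReal v x)) =
      .ofReal (gaussianRatioPDFReal (finrank ℝ E) t) := by
  have : (0 : ℝ) < v := NNReal.coe_pos.2 (pos_iff_ne_zero.2 hv)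
  have hint : Integrable fun x : E =>
      ‖x‖ * gaussianPDFReal 0 v (t * ‖x‖) * isotropicGaussianPDFReal v x := by
    simp only [norm_mul_gaussianPDFReal_mul_isotropicGaussianPDFReal]
    exact (integrable_norm_rpow_mul_exp_neg_mul_sq (by positivity) (by linarith)).const_mul _
  have hnonneg (x : E) : 0 ≤ ‖x‖ * gaussianPDFReal 0 v (t * ‖x‖) * isotropicGaussianPDFReal v x :=
    mul_nonneg (mul_nonneg (norm_nonneg x) (gaussianPDFReal_nonneg _ _ _))
      (isotropicGaussianPDFReal_nonneg v x)
  rw [← integral_norm_mul_gaussianPDFReal_mul_isotropicGaussianPDFReal hv,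
    ofReal_integral_eq_lintegral_ofReal hint (.of_forall hnonneg),
    lintegral_withDensity_eq_lintegral_mul _
      (measurable_isotropicGaussianPDFReal v).ennreal_ofReal (by fun_prop)]
  refine lintegral_congr fun x => ?_
  rw [Pi.mul_apply, abs_norm, gaussianPDF, ← ENNReal.ofReal_mul (norm_nonneg x), mul_comm,
    ← ENNReal.ofReal_mul' (isotropicGaussianPDFReal_nonneg v x)]

variable {Ω : Type*} [MeasurableSpace Ω] {P : Measure Ω} {Z : Ω → E}

lemma ae_norm_pos_of_hasLaw_isotropicGaussian
    (hZ : HasLaw Z (volume.withDensity fun x => .ofReal (isotropicGaussianPDFReal v x)) P) :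
    ∀ᵐ ω ∂P, 0 < ‖Z ω‖ := by
  simp only [norm_pos_iff]
  exact (hZ.ae_iff (measurableSet_setOfPred.1 (measurableSet_singleton 0).compl)).2
    ((withDensity_absolutelyContinuous _ _).ae_le (Measure.ae_ne volume 0))

lemma hasLaw_gaussianReal_div_norm (hv : v ≠ 0) {Y : Ω → ℝ} (hY : HasLaw Y (gaussianReal 0 v) P)
    (hZ : HasLaw Z (volume.withDensity fun x => .ofReal (isotropicGaussianPDFReal v x)) P)
    (hYZ : Y ⟂ᵢ[P] Z) :
    HasLaw (fun ω => Y ω / ‖Z ω‖)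
      (volume.withDensity fun t => .ofReal (gaussianRatioPDFReal (finrank ℝ E) t)) P := by
  have := hY.isProbabilityMeasure
  rw [gaussianReal_of_var_ne_zero 0 hv] at hY
  have hZ₀ : ∀ᵐ ω ∂P, ‖Z ω‖ ≠ 0 :=
    (ae_norm_pos_of_hasLaw_isotropicGaussian hZ).mono fun _ hω => hω.ne'
  convert hasLaw_div_of_indepFun (measurable_gaussianPDF 0 v) hY (by fun_prop) hZ₀
    (hYZ.comp measurable_id measurable_norm) using 3 with t
  rw [← lintegral_norm_mul_gaussianPDF_isotropicGaussian hv]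
  exact (hZ.lintegral_comp (by fun_prop)).symm

end GaussianRatio

section Projection

lemma hasDerivAt_sin_arctan (t : ℝ) :
    HasDerivAt (fun t => sin (arctan t)) ((1 + t ^ 2) ^ (-(3 / 2 : ℝ))) t := by
  refine (hasDerivAt_arctan t).sin.congr_deriv ?_
  rw [cos_arctan, one_div, one_div, ← rpow_neg_one (1 + t ^ 2), sqrt_eq_rpow,
    ← rpow_neg (by positivity), ← rpow_add (by positivity)]
  norm_num

lemma sin_arctan_injective : Function.Injective fun t => sin (arctan t) :=
  fun s t h => arctan_injective (injOn_sin (Ioo_subset_Icc_self (arctan_mem_Ioo s))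
    (Ioo_subset_Icc_self (arctan_mem_Ioo t)) h)

lemma range_const_mul_sin_arctan {c : ℝ} (hc : 0 < c) :
    range (fun t => c * sin (arctan t)) = {u | |u| < c} := by
  ext u
  constructor
  · rintro ⟨t, rfl⟩
    have hcos := pow_pos (cos_arctan_pos t) 2
    have hsin : |sin (arctan t)| < 1 := by
      rw [← sq_lt_one_iff_abs_lt_one]
      linarith [sin_sq_add_cos_sq (arctan t)]
    rw [mem_ofPred_eq, abs_mul, abs_of_pos hc]
    exact mul_lt_of_lt_one_right hc hsin
  · intro hu
    have hu' : |u / c| < 1 := by rwa [abs_div, abs_of_pos hc, div_lt_one hc]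
    obtain ⟨hlt, hgt⟩ := abs_lt.1 hu'
    refine ⟨tan (arcsin (u / c)), ?_⟩
    beta_reduce
    rw [arctan_tan (neg_pi_div_two_lt_arcsin.2 hlt) (arcsin_lt_pi_div_two.2 hgt),
      sin_arcsin hlt.le hgt.le, mul_div_cancel₀ u hc.ne']

lemma map_const_mul_sin_arctan_withDensity {c : ℝ} (hc : 0 < c) (K a : ℝ) :
    (volume.withDensity fun t => .ofReal (K * (1 + t ^ 2) ^ (-(a + 3 / 2)))).map
        (fun t => c * sin (arctan t)) =
      volume.withDensity fun u =>
        .ofReal (if |u| < c then 1 / c * K * (1 - u ^ 2 / c ^ 2) ^ a else 0) := by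
  have hjac (t : ℝ) : ENNReal.ofReal (K * (1 + t ^ 2) ^ (-(a + 3 / 2))) =
      .ofReal |c * (1 + t ^ 2) ^ (-(3 / 2 : ℝ))| *
        .ofReal (1 / c * K * (1 - (c * sin (arctan t)) ^ 2 / c ^ 2) ^ a) := by
    have ht : 0 < 1 + t ^ 2 := by positivity
    have hcos : 1 - (c * sin (arctan t)) ^ 2 / c ^ 2 = (1 + t ^ 2)⁻¹ := by
      rw [mul_pow, mul_div_cancel_left₀ _ (by positivity), ← cos_sq', cos_sq_arctan, one_div]
    rw [← ENNReal.ofReal_mul (abs_nonneg _), abs_of_pos (by positivity), hcos, inv_rpow ht.le,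
      ← rpow_neg ht.le, neg_add, rpow_add ht]
    congr 1
    field_simp
  have hmeas : MeasurableSet {u : ℝ | |u| < c} := measurableSet_lt (by fun_prop) measurable_const
  simp only [hjac]
  rw [map_withDensity_abs_deriv_mul_comp (fun t => (hasDerivAt_sin_arctan t).const_mul c)
      ((mul_right_injective₀ hc.ne').comp sin_arctan_injective)
      fun u => .ofReal (1 / c * K * (1 - u ^ 2 / c ^ 2) ^ a),
    range_const_mul_sin_arctan hc, ← withDensity_indicator hmeas]
  congr 1 with u
  by_cases hu : |u| < c <;> simp [indicator, hu]

/-- For `m ≥ 2`, the density of `X j / √((1 / m) * ∑ i, X i ^ 2)` for `m` i.i.d. centred Gaussians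
`X i`, i.e. of a coordinate of a uniform random point on the sphere of radius `√m` in `ℝᵐ`. -/
noncomputable def adamUpdatePDFReal (m : ℕ) (x : ℝ) : ℝ :=
  if |x| < √m then
    1 / √m * (Gamma (m / 2) / (Gamma ((m - 1) / 2) * Gamma (1 / 2))) *
      (1 - x ^ 2 / m) ^ (((m : ℝ) - 1) / 2 - 1)
  else 0

lemma map_sqrt_mul_sin_arctan_withDensity_gaussianRatioPDFReal (n : ℕ) :
    (volume.withDensity fun t => .ofReal (gaussianRatioPDFReal n t)).map
        (fun t => √(n + 1 : ℕ) * sin (arctan t)) =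
      volume.withDensity fun x => .ofReal (adamUpdatePDFReal (n + 1) x) := by
  have hexponent : (n + 1 : ℝ) / 2 = n / 2 - 1 + 3 / 2 := by ring
  have hsqrt : 0 < √(n + 1 : ℝ) := by positivity
  simp only [gaussianRatioPDFReal, adamUpdatePDFReal, Nat.cast_add_one, add_sub_cancel_right]
  simp only [hexponent, map_const_mul_sin_arctan_withDensity hsqrt,
    sq_sqrt (by positivity : (0 : ℝ) ≤ n + 1)]

lemma sqrt_mul_sin_arctan_div (c y : ℝ) {r : ℝ} (hr : 0 < r) :
    √c * sin (arctan (y / r)) = y / √(1 / c * (y ^ 2 + r ^ 2)) := by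
  have hsum : y ^ 2 + r ^ 2 = r ^ 2 * (1 + (y / r) ^ 2) := by
    field_simp
    ring
  rw [sin_arctan, hsum, sqrt_mul' _ (by positivity), sqrt_mul (sq_nonneg r), sqrt_sq hr.le,
    one_div, sqrt_inv, div_mul_eq_div_div, div_inv_eq_mul]
  field_simp

end Projection

lemma indepFun_toLp_compl_singleton {Ω ι : Type*} [MeasurableSpace Ω]
    {P : Measure Ω} [Fintype ι] [DecidableEq ι] {X : ι → Ω → ℝ} (hindep : iIndepFun X P)
    (hX : ∀ i, AEMeasurable (X i) P) (j : ι) :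
    X j ⟂ᵢ[P] fun ω => WithLp.toLp 2 fun i : ({j}ᶜ : Finset ι) => X i ω :=
  (hindep.indepFun_finset₀ {j} {j}ᶜ disjoint_compl_right hX).comp
    (measurable_pi_apply (⟨j, Finset.mem_singleton_self j⟩ : ({j} : Finset ι)))
    (WithLp.measurable_toLp 2 _)

theorem adam_update_density_general {Ω ι : Type*} [MeasurableSpace Ω] {P : Measure Ω}
    [Fintype ι] [Nontrivial ι] {v : ℝ≥0} (hv : v ≠ 0) {X : ι → Ω → ℝ}
    (hX : ∀ i, HasLaw (X i) (gaussianReal 0 v) P) (hindep : iIndepFun X P) (j : ι) :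
    HasLaw (fun ω => X j ω / √(1 / (Fintype.card ι : ℝ) * ∑ i, X i ω ^ 2))
      (volume.withDensity fun x => .ofReal (adamUpdatePDFReal (Fintype.card ι) x)) P := by
  classical
  obtain ⟨k, hk⟩ := exists_ne j
  have : Nonempty ({j}ᶜ : Finset ι) := ⟨k, by simpa using hk⟩
  have hcard : Fintype.card ι = Fintype.card ({j}ᶜ : Finset ι) + 1 := by
    rw [Fintype.card_coe, ← Finset.card_compl_add_card {j}, Finset.card_singleton]
  let Z : Ω → EuclideanSpace ℝ ({j}ᶜ : Finset ι) := fun ω => WithLp.toLp 2 fun i => X i ω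
  have hZ : HasLaw Z (volume.withDensity fun x => .ofReal (isotropicGaussianPDFReal v x)) P :=
    hasLaw_toLp_of_iIndepFun_gaussianReal hv (fun i => hX i)
      (hindep.precomp Subtype.val_injective)
  have hratio := hasLaw_gaussianReal_div_norm hv (hX j) hZ
    (indepFun_toLp_compl_singleton hindep (fun i => (hX i).aemeasurable) j)
  have hsum (ω : Ω) : ∑ i, X i ω ^ 2 = X j ω ^ 2 + ‖Z ω‖ ^ 2 := by
    rw [Fintype.sum_eq_add_sum_compl j, EuclideanSpace.real_norm_sq_eq, ← Finset.sum_coe_sort]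
  rw [finrank_euclideanSpace] at hratio
  simp only [hsum, hcard]
  refine (HasLaw.fun_comp ⟨by fun_prop,
    map_sqrt_mul_sin_arctan_withDensity_gaussianRatioPDFReal _⟩ hratio).congr ?_
  filter_upwards [ae_norm_pos_of_hasLaw_isotropicGaussian hZ] with ω hω
  exact (sqrt_mul_sin_arctan_div _ _ hω).symm

/-- If `X 0, …, X (m-1)` (representing `X_1, …, X_m`) are i.i.d. standard
normal random variables with `m ≥ 2`, then `T_m = X_m / √((1/m) ∑_{i=1}^m X_i²)` has density
`f_m(x) = (1/√m) · Γ(m/2) / (Γ((m-1)/2) Γ(1/2)) · (1 - x²/m)^((m-1)/2 - 1)` for `|x| < √m`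
and `f_m(x) = 0` otherwise. -/
theorem adam_update_density
    {Ω : Type*} [MeasureSpace Ω] [IsProbabilityMeasure (ℙ : Measure Ω)]
    (m : ℕ) (hm : 2 ≤ m)
    (X : Fin m → Ω → ℝ) (hmeas : ∀ i, Measurable (X i))
    (hindep : iIndepFun X ℙ)
    (hdist : ∀ i, Measure.map (X i) ℙ = gaussianReal 0 1) :
    Measure.map
        (fun ω => X ⟨m - 1, by omega⟩ ω /
          Real.sqrt ((1 / (m : ℝ)) * ∑ i : Fin m, X i ω ^ 2)) ℙ =
      volume.withDensity (fun x => ENNReal.ofReal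
        (if |x| < Real.sqrt m then
          (1 / Real.sqrt m) *
            (Real.Gamma ((m : ℝ) / 2) /
              (Real.Gamma (((m : ℝ) - 1) / 2) * Real.Gamma (1 / 2))) *
            (1 - x ^ 2 / m) ^ (((m : ℝ) - 1) / 2 - 1)
        else 0)) := by
  have : Nontrivial (Fin m) := Fin.nontrivial_iff_two_le.2 hm
  simpa only [Fintype.card_fin, adamUpdatePDFReal] using (adam_update_density_general one_ne_zero
    (fun i => ⟨(hmeas i).aemeasurable, hdist i⟩) hindep _).map_eq
end

section
/- Let m ≥ 2 and let X_1, …, X_m be i.i.d. standard normal random variables. Define T_m = X_m / sqrt((1/m) ∑_{i=1}^m X_i²). Then E[T_m] = 0 and Var[T_m] = E[T_m²] = 1. In particular, the variance of the Adam update under these assumptions is constant in the time step m and does not diverge. -/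
open MeasureTheory ProbabilityTheory

/-!
The update is a coordinate of the root-mean-square normalization of the vector `(X_1, …, X_m)`.
This normalization is odd, so the update has a symmetric law and mean zero. It commutes with
permutations of the coordinates, so the squares of the normalized coordinates are exchangeable;
as they sum to `m` whenever the vector is nonzero, each of them has expectation one.
-/

section RmsNormalize

variable {ι : Type*} [Fintype ι]

/-- The root-mean-square normalization of a vector: every coordinate is divided by the square root
of the average of the squared coordinates. The zero vector is sent to itself. -/
noncomputable def rmsNormalize (x : ι → ℝ) : ι → ℝ :=
  fun i ↦ x i / √((1 / (Fintype.card ι : ℝ)) * ∑ j, x j ^ 2)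

lemma measurable_rmsNormalize : Measurable (rmsNormalize : (ι → ℝ) → ι → ℝ) := by
  unfold rmsNormalize
  fun_prop

lemma rmsNormalize_neg (x : ι → ℝ) : rmsNormalize (-x) = -rmsNormalize x := by
  ext i
  simp [rmsNormalize, neg_div]

lemma rmsNormalize_comp_perm (x : ι → ℝ) (σ : Equiv.Perm ι) :
    rmsNormalize (x ∘ σ) = rmsNormalize x ∘ σ := by
  ext i
  simp [rmsNormalize, Equiv.sum_comp σ fun j ↦ x j ^ 2]

lemma sum_sq_rmsNormalize {x : ι → ℝ} (hx : x ≠ 0) :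
    ∑ i, rmsNormalize x i ^ 2 = Fintype.card ι := by
  obtain ⟨k, hk⟩ := Function.ne_iff.mp hx
  have hcard : (Fintype.card ι : ℝ) ≠ 0 := Nat.cast_ne_zero.mpr (@Fintype.card_ne_zero ι _ ⟨k⟩)
  have hsum : 0 < ∑ j, x j ^ 2 :=
    Finset.sum_pos' (fun j _ ↦ sq_nonneg (x j)) ⟨k, Finset.mem_univ k, sq_pos_of_ne_zero hk⟩
  calc ∑ i, rmsNormalize x i ^ 2
      = ∑ i, x i ^ 2 / ((1 / (Fintype.card ι : ℝ)) * ∑ j, x j ^ 2) := by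
        simp only [rmsNormalize, div_pow, Real.sq_sqrt (by positivity :
          0 ≤ (1 / (Fintype.card ι : ℝ)) * ∑ j, x j ^ 2)]
    _ = Fintype.card ι := by
        rw [← Finset.sum_div]
        field_simp

lemma sq_rmsNormalize_le_card (x : ι → ℝ) (i : ι) : rmsNormalize x i ^ 2 ≤ Fintype.card ι := by
  rcases eq_or_ne x 0 with rfl | hx
  · simp [rmsNormalize]
  · rw [← sum_sq_rmsNormalize hx]
    exact Finset.single_le_sum (f := fun j ↦ rmsNormalize x j ^ 2) (fun j _ ↦ sq_nonneg _)
      (Finset.mem_univ i)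

end RmsNormalize

section Exchangeable

variable {Ω ι E F : Type*} {mΩ : MeasurableSpace Ω} {μ : Measure Ω}
  [MeasurableSpace E] [MeasurableSpace F]

/-- A random vector is exchangeable if permuting its coordinates does not change its law. -/
def IsExchangeable (X : Ω → ι → E) (μ : Measure Ω) : Prop :=
  ∀ σ : Equiv.Perm ι, IdentDistrib X (fun ω ↦ X ω ∘ σ) μ μ

namespace IsExchangeable

lemma comp_of_equivariant {X : Ω → ι → E} (hX : IsExchangeable X μ) {f : (ι → E) → ι → F}
    (hf : Measurable f) (hperm : ∀ (x : ι → E) (σ : Equiv.Perm ι), f (x ∘ σ) = f x ∘ σ) :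
    IsExchangeable (fun ω ↦ f (X ω)) μ := fun σ ↦ by
  simp only [← hperm]
  exact (hX σ).comp hf

lemma identDistrib_apply {X : Ω → ι → E} (hX : IsExchangeable X μ) (i j : ι) :
    IdentDistrib (fun ω ↦ X ω i) (fun ω ↦ X ω j) μ μ := by
  classical
  simpa [Function.comp_def] using (hX (Equiv.swap i j)).comp (measurable_pi_apply i)

lemma integral_apply_eq_div_card [Fintype ι] [IsProbabilityMeasure μ] {X : Ω → ι → ℝ}
    (hX : IsExchangeable X μ) {i : ι} (hint : Integrable (fun ω ↦ X ω i) μ) {c : ℝ}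
    (hsum : ∀ᵐ ω ∂μ, ∑ j, X ω j = c) :
    ∫ ω, X ω i ∂μ = c / Fintype.card ι := by
  have hcard : (Fintype.card ι : ℝ) ≠ 0 := Nat.cast_ne_zero.mpr (@Fintype.card_ne_zero ι _ ⟨i⟩)
  rw [eq_div_iff hcard]
  calc (∫ ω, X ω i ∂μ) * Fintype.card ι
      = ∑ _j : ι, ∫ ω, X ω i ∂μ := by simp [mul_comm]
    _ = ∑ j, ∫ ω, X ω j ∂μ :=
        Finset.sum_congr rfl fun j _ ↦ (hX.identDistrib_apply i j).integral_eq
    _ = ∫ ω, ∑ j, X ω j ∂μ :=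
        (integral_finsetSum _ fun j _ ↦ (hX.identDistrib_apply i j).integrable_snd hint).symm
    _ = c := by simp [integral_congr_ae hsum]

end IsExchangeable

end Exchangeable

section Independent

variable {Ω ι : Type*} {mΩ : MeasurableSpace Ω} {μ : Measure Ω} [Countable ι]

lemma isExchangeable_of_iIndepFun {E : Type*} [MeasurableSpace E] {X : ι → Ω → E}
    (hindep : iIndepFun X μ) (hident : ∀ i j, IdentDistrib (X i) (X j) μ μ) :
    IsExchangeable (fun ω i ↦ X i ω) μ := fun σ ↦
  IdentDistrib.pi (fun i ↦ hident i (σ i)) hindep (hindep.precomp σ.injective)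

lemma identDistrib_neg_of_iIndepFun {E : ι → Type*} [∀ i, MeasurableSpace (E i)]
    [∀ i, Neg (E i)] [∀ i, MeasurableNeg (E i)] {X : (i : ι) → Ω → E i}
    (hindep : iIndepFun X μ) (hsymm : ∀ i, IdentDistrib (X i) (-X i) μ μ) :
    IdentDistrib (fun ω i ↦ X i ω) (fun ω ↦ -fun i ↦ X i ω) μ μ :=
  IdentDistrib.pi hsymm hindep (hindep.comp (fun _ x ↦ -x) fun _ ↦ measurable_neg)

end Independent

section Moments

variable {Ω ι : Type*} {mΩ : MeasurableSpace Ω} {μ : Measure Ω}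

lemma integral_eq_zero_of_identDistrib_neg {E : Type*} [NormedAddCommGroup E] [NormedSpace ℝ E]
    [MeasurableSpace E] [BorelSpace E] {Y : Ω → E} (hY : IdentDistrib Y (fun ω ↦ -Y ω) μ μ) :
    ∫ ω, Y ω ∂μ = 0 := by
  have : IsAddTorsionFree E := .of_isTorsionFree ℝ E
  rw [← self_eq_neg, ← integral_neg]
  exact hY.integral_eq

variable [Fintype ι] {X : Ω → ι → ℝ}

lemma integral_rmsNormalize_eq_zero (hneg : IdentDistrib X (-X) μ μ) (i : ι) :
    ∫ ω, rmsNormalize (X ω) i ∂μ = 0 := by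
  refine integral_eq_zero_of_identDistrib_neg ?_
  simpa [Function.comp_def, rmsNormalize_neg] using
    hneg.comp ((measurable_pi_apply i).comp measurable_rmsNormalize)

lemma integral_sq_rmsNormalize_eq_one [IsProbabilityMeasure μ] (hexch : IsExchangeable X μ)
    (hne : ∀ᵐ ω ∂μ, X ω ≠ 0) (i : ι) :
    ∫ ω, rmsNormalize (X ω) i ^ 2 ∂μ = 1 := by
  have hexch_sq : IsExchangeable (fun ω j ↦ rmsNormalize (X ω) j ^ 2) μ :=
    hexch.comp_of_equivariant (f := fun x j ↦ rmsNormalize x j ^ 2)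
      (by have := measurable_rmsNormalize (ι := ι); fun_prop)
      fun x σ ↦ by simp only [rmsNormalize_comp_perm]; rfl
  have hint : Integrable (fun ω ↦ rmsNormalize (X ω) i ^ 2) μ :=
    .of_bound (hexch_sq.identDistrib_apply i i).aestronglyMeasurable_fst (Fintype.card ι)
      (ae_of_all _ fun ω ↦ by simpa using sq_rmsNormalize_le_card (X ω) i)
  have hcard : (Fintype.card ι : ℝ) ≠ 0 := Nat.cast_ne_zero.mpr (@Fintype.card_ne_zero ι _ ⟨i⟩)
  rw [hexch_sq.integral_apply_eq_div_card hint (hne.mono fun ω ↦ sum_sq_rmsNormalize),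
    div_self hcard]

theorem adam_update_mean_zero_variance_one_general [IsProbabilityMeasure μ]
    (hneg : IdentDistrib X (-X) μ μ) (hexch : IsExchangeable X μ) (hne : ∀ᵐ ω ∂μ, X ω ≠ 0)
    (i : ι) :
    ∫ ω, rmsNormalize (X ω) i ∂μ = 0 ∧ ∫ ω, rmsNormalize (X ω) i ^ 2 ∂μ = 1 ∧
      variance (fun ω ↦ rmsNormalize (X ω) i) μ = 1 := by
  have hmean := integral_rmsNormalize_eq_zero hneg i
  have hsq := integral_sq_rmsNormalize_eq_one hexch hne i
  have hmeas : AEMeasurable (fun ω ↦ rmsNormalize (X ω) i) μ :=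
    ((measurable_pi_apply i).comp measurable_rmsNormalize).comp_aemeasurable hneg.aemeasurable_fst
  exact ⟨hmean, hsq, (variance_of_integral_eq_zero hmeas hmean).trans hsq⟩

end Moments

section Gaussian

variable {Ω : Type*} {mΩ : MeasurableSpace Ω} {μ : Measure Ω} {Y : Ω → ℝ} {v : NNReal}

lemma identDistrib_neg_of_hasLaw_gaussianReal (hY : HasLaw Y (gaussianReal 0 v) μ) :
    IdentDistrib Y (-Y) μ μ :=
  hY.identDistrib (by simpa using gaussianReal_neg hY)

lemma ae_ne_of_hasLaw_gaussianReal {a : ℝ} (hv : v ≠ 0) (hY : HasLaw Y (gaussianReal a v) μ)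
    (b : ℝ) : ∀ᵐ ω ∂μ, Y ω ≠ b := by
  have := nullSingletonClass_gaussianReal (μ := a) hv
  have hlaw : ∀ᵐ y ∂μ.map Y, y ≠ b := by
    rw [hY.map_eq]
    exact Measure.ae_ne _ b
  exact ae_of_ae_map hY.aemeasurable hlaw

end Gaussian

/-- If `X 0, …, X (m-1)` (representing `X_1, …, X_m`) are i.i.d. standard
normal random variables with `m ≥ 2` and `T_m = X_m / √((1/m) ∑_{i=1}^m X_i²)`, then
`E[T_m] = 0` and `Var[T_m] = E[T_m²] = 1`: the variance of the Adam update is constant in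
the time step `m` and does not diverge. -/
theorem adam_update_mean_zero_variance_one
    {Ω : Type*} [MeasureSpace Ω] [IsProbabilityMeasure (ℙ : Measure Ω)]
    (m : ℕ) (hm : 2 ≤ m)
    (X : Fin m → Ω → ℝ) (hmeas : ∀ i, Measurable (X i))
    (hindep : iIndepFun X ℙ)
    (hdist : ∀ i, Measure.map (X i) ℙ = gaussianReal 0 1)
    (T : Ω → ℝ)
    (hT : ∀ ω, T ω =
      X ⟨m - 1, by omega⟩ ω / Real.sqrt ((1 / (m : ℝ)) * ∑ i : Fin m, X i ω ^ 2)) :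
    (∫ ω, T ω ∂ℙ = 0) ∧ (∫ ω, T ω ^ 2 ∂ℙ = 1) ∧ variance T ℙ = 1 := by
  have hlaw (i : Fin m) : HasLaw (X i) (gaussianReal 0 1) ℙ := ⟨(hmeas i).aemeasurable, hdist i⟩
  have hneg := identDistrib_neg_of_iIndepFun hindep fun i ↦
    identDistrib_neg_of_hasLaw_gaussianReal (hlaw i)
  have hexch := isExchangeable_of_iIndepFun hindep fun i j ↦ (hlaw i).identDistrib (hlaw j)
  have hne : ∀ᵐ ω, (fun i ↦ X i ω) ≠ 0 :=
    (ae_ne_of_hasLaw_gaussianReal one_ne_zero (hlaw ⟨m - 1, by omega⟩) 0).mono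
      fun ω hω hzero ↦ hω (congrFun hzero _)
  have hT_eq : T = fun ω ↦ rmsNormalize (fun i ↦ X i ω) ⟨m - 1, by omega⟩ := by
    ext ω
    simp only [hT, rmsNormalize, Fintype.card_fin]
  rw [hT_eq]
  exact adam_update_mean_zero_variance_one_general hneg hexch hne _
end

section
/- Let m ≥ 2 and let X_1, …, X_m be i.i.d. standard normal random variables. Define T_m = X_m / sqrt((1/m) ∑_{i=1}^m X_i²). Then E[|T_m|] = 2 √m Γ(m/2) / (√π (m-1) Γ((m-1)/2)), and consequently Var[|T_m|] = 1 - 4 m Γ(m/2)² / ((m-1)² π Γ((m-1)/2)²). -/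
open MeasureTheory ProbabilityTheory

/-!
A standard Gaussian vector `x` in an `n`-dimensional Euclidean space has a radial density, so in
polar coordinates its direction `x / ‖x‖` and its norm are independent. For a unit vector `u` this
gives `E |⟪u, x⟫| ^ p = E |⟪u, x / ‖x‖⟫| ^ p * E ‖x‖ ^ p`, where `⟪u, x⟫` is a standard normal
variable; both Gaussian moments are instances, in dimensions `1` and `n`, of
`E ‖x‖ ^ p = 2 ^ (p / 2) * Γ ((n + p) / 2) / Γ (n / 2)`. The Adam update is `√n` times a
coordinate of the direction, and the cases `p = 1` and `p = 2` yield its absolute mean and its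
second moment `1`.
-/

open Set Module
open scoped ENNReal RealInnerProductSpace

section Polar

variable {E : Type*} [NormedAddCommGroup E] [NormedSpace ℝ E] [MeasurableSpace E] [BorelSpace E]

lemma measurable_normalize [SecondCountableTopology E] :
    Measurable (NormedSpace.normalize : E → E) :=
  measurable_norm.inv.smul measurable_id

variable [FiniteDimensional ℝ E] [Nontrivial E] (μ : Measure E) [μ.IsAddHaarMeasure]

lemma lintegral_normalize_mul_norm_addHaar {f : E → ℝ≥0∞} {g : ℝ → ℝ≥0∞}
    (hf : Measurable f) (hg : Measurable g) :
    ∫⁻ x, f (NormedSpace.normalize x) * g ‖x‖ ∂μ =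
      (∫⁻ u, f u ∂μ.toSphere) * ∫⁻ r, g r ∂Measure.volumeIoiPow (finrank ℝ E - 1) := by
  calc ∫⁻ x, f (NormedSpace.normalize x) * g ‖x‖ ∂μ
      = ∫⁻ x : ({0}ᶜ : Set E), f (NormedSpace.normalize x) * g ‖(x : E)‖ ∂μ.comap (↑) := by
        rw [lintegral_subtype_comap (measurableSet_singleton 0).compl
          fun x ↦ f (NormedSpace.normalize x) * g ‖x‖, restrict_compl_singleton]
    _ = ∫⁻ z, f z.1 * g z.2 ∂μ.toSphere.prod (.volumeIoiPow (finrank ℝ E - 1)) := by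
        simp [← μ.measurePreserving_homeomorphUnitSphereProd.lintegral_comp_emb
          (Homeomorph.measurableEmbedding _), NormedSpace.normalize]
    _ = (∫⁻ u, f u ∂μ.toSphere) * ∫⁻ r, g r ∂Measure.volumeIoiPow (finrank ℝ E - 1) :=
        lintegral_prod_mul (hf.comp measurable_subtype_coe).aemeasurable
          (hg.comp measurable_subtype_coe).aemeasurable

lemma indepFun_normalize_norm_withDensity {φ : ℝ → ℝ≥0∞} (hφ : Measurable φ)
    [IsProbabilityMeasure (μ.withDensity fun x ↦ φ ‖x‖)] :
    IndepFun NormedSpace.normalize norm (μ.withDensity fun x ↦ φ ‖x‖) := by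
  set ν := μ.withDensity fun x ↦ φ ‖x‖
  have polar {A : Set E} {B : Set ℝ} (hA : MeasurableSet A) (hB : MeasurableSet B) :
      ν (NormedSpace.normalize ⁻¹' A ∩ norm ⁻¹' B) =
        (∫⁻ u, A.indicator 1 (u : E) ∂μ.toSphere) *
          ∫⁻ r, B.indicator φ r ∂Measure.volumeIoiPow (finrank ℝ E - 1) := by
    have hAB : MeasurableSet (NormedSpace.normalize ⁻¹' A ∩ norm ⁻¹' B) :=
      (measurable_normalize hA).inter (measurable_norm hB)
    rw [← lintegral_normalize_mul_norm_addHaar μ (measurable_one.indicator hA) (hφ.indicator hB),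
      withDensity_apply _ hAB, ← lintegral_indicator hAB]
    congr with x
    by_cases hxA : NormedSpace.normalize x ∈ A <;> by_cases hxB : ‖x‖ ∈ B <;> simp [hxA, hxB]
  have marginal_normalize {A : Set E} (hA : MeasurableSet A) := polar hA .univ
  have marginal_norm {B : Set ℝ} (hB : MeasurableSet B) := polar .univ hB
  have total := polar .univ .univ
  simp only [preimage_univ, univ_inter, inter_univ, measure_univ]
    at marginal_normalize marginal_norm total
  refine indepFun_iff_measure_inter_preimage_eq_mul.2 fun A B hA hB ↦ ?_
  rw [polar hA hB, marginal_normalize hA, marginal_norm hB, ← mul_one (_ * _), total]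
  ring

end Polar

section Gaussian

/-- The density at distance `r` from the origin of the standard Gaussian measure on an
`n`-dimensional Euclidean space, as a function of the radius only. -/
noncomputable def gaussianRadialDensity (n : ℕ) (r : ℝ) : ℝ :=
  (2 * Real.pi) ^ (-(n / 2 : ℝ)) * Real.exp (-(1 / 2) * r ^ 2)

lemma gaussianRadialDensity_nonneg (n : ℕ) (r : ℝ) : 0 ≤ gaussianRadialDensity n r := by
  unfold gaussianRadialDensity
  positivity

@[fun_prop]
lemma measurable_gaussianRadialDensity (n : ℕ) : Measurable (gaussianRadialDensity n) := by
  unfold gaussianRadialDensity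
  fun_prop

variable {E : Type*} [NormedAddCommGroup E] [InnerProductSpace ℝ E] [FiniteDimensional ℝ E]
  [MeasurableSpace E] [BorelSpace E]

lemma integrable_gaussianRadialDensity_norm :
    Integrable fun x : E ↦ gaussianRadialDensity (finrank ℝ E) ‖x‖ := by
  refine .const_mul (.of_integral_ne_zero ?_) _
  rw [GaussianFourier.integral_rexp_neg_mul_sq_norm (by norm_num)]
  positivity

lemma integral_gaussianRadialDensity_norm_mul_cexp (t : E) :
    ∫ x : E, gaussianRadialDensity (finrank ℝ E) ‖x‖ * Complex.exp (⟪x, t⟫ * Complex.I) =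
      Complex.exp (-‖t‖ ^ 2 / 2) := by
  have split (x : E) :
      gaussianRadialDensity (finrank ℝ E) ‖x‖ * Complex.exp (⟪x, t⟫ * Complex.I) =
        ((2 * Real.pi) ^ (-(finrank ℝ E / 2 : ℝ)) : ℝ) *
          Complex.exp (-(1 / 2) * ‖x‖ ^ 2 + Complex.I * ⟪t, x⟫) := by
    rw [gaussianRadialDensity, Complex.exp_add, real_inner_comm x t, mul_comm Complex.I]
    push_cast
    ring
  have normalization : (((2 * Real.pi) ^ (-(finrank ℝ E / 2 : ℝ)) : ℝ) : ℂ) *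
      (Real.pi / (1 / 2)) ^ (finrank ℝ E / 2 : ℂ) = 1 := by
    have h2π : (Real.pi / (1 / 2) : ℂ) = ((2 * Real.pi : ℝ) : ℂ) := by push_cast; ring
    have hexp : (finrank ℝ E / 2 : ℂ) = ((finrank ℝ E / 2 : ℝ) : ℂ) := by push_cast; rfl
    rw [h2π, hexp, ← Complex.ofReal_cpow (by positivity), ← Complex.ofReal_mul,
      ← Real.rpow_add (by positivity), neg_add_cancel, Real.rpow_zero, Complex.ofReal_one]
  simp_rw [split]
  rw [integral_const_mul, GaussianFourier.integral_cexp_neg_mul_sq_norm_add (by norm_num),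
    ← mul_assoc, normalization, one_mul, Complex.I_sq]
  ring_nf

lemma stdGaussian_eq_withDensity :
    stdGaussian E = volume.withDensity fun x ↦
      ENNReal.ofReal (gaussianRadialDensity (finrank ℝ E) ‖x‖) := by
  have := isFiniteMeasure_withDensity_ofReal
    (integrable_gaussianRadialDensity_norm (E := E)).hasFiniteIntegral
  refine Measure.ext_of_charFun (funext fun t ↦ ?_)
  rw [charFun_stdGaussian, charFun_apply, integral_withDensity_eq_integral_toReal_smul
    (by fun_prop) (by simp),
    ← integral_gaussianRadialDensity_norm_mul_cexp]
  simp only [ENNReal.toReal_ofReal (gaussianRadialDensity_nonneg _ _), Complex.real_smul]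

lemma stdGaussian_real : stdGaussian ℝ = gaussianReal 0 1 :=
  Measure.ext_of_charFun <| funext fun t ↦ by
    simp [charFun_stdGaussian, charFun_gaussianReal, neg_div, ← Complex.ofReal_pow]

lemma finrank_mul_volume_real_ball_mul_two_pi_rpow [Nontrivial E] :
    finrank ℝ E * volume.real (Metric.ball (0 : E) 1) *
        (2 * Real.pi) ^ (-(finrank ℝ E / 2 : ℝ)) =
      2 / (2 ^ (finrank ℝ E / 2 : ℝ) * Real.Gamma (finrank ℝ E / 2)) := by
  have hdim : (0 : ℝ) < finrank ℝ E := by exact_mod_cast finrank_pos (R := ℝ) (M := E)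
  have := Real.Gamma_pos_of_pos (half_pos hdim)
  have hsqrt : √Real.pi ^ finrank ℝ E = Real.pi ^ (finrank ℝ E / 2 : ℝ) := by
    rw [Real.sqrt_eq_rpow, ← Real.rpow_mul_natCast Real.pi_pos.le]
    ring_nf
  rw [measureReal_def, InnerProductSpace.volume_ball, ENNReal.ofReal_one, one_pow, one_mul,
    Real.Gamma_add_one (by positivity), ENNReal.toReal_ofReal (by positivity), hsqrt,
    Real.rpow_neg (by positivity), Real.mul_rpow two_pos.le Real.pi_pos.le]
  field_simp

lemma integral_comp_norm_stdGaussian [Nontrivial E] (f : ℝ → ℝ) :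
    ∫ x, f ‖x‖ ∂stdGaussian E =
      2 / (2 ^ (finrank ℝ E / 2 : ℝ) * Real.Gamma (finrank ℝ E / 2)) *
        ∫ r in Ioi (0 : ℝ), r ^ (finrank ℝ E - 1 : ℝ) * Real.exp (-(1 / 2) * r ^ 2) * f r := by
  have hdim : (finrank ℝ E - 1 : ℝ) = (finrank ℝ E - 1 : ℕ) :=
    (Nat.cast_pred (finrank_pos (R := ℝ) (M := E))).symm
  have radial (r : ℝ) : r ^ (finrank ℝ E - 1) • (gaussianRadialDensity (finrank ℝ E) r • f r) =
      (2 * Real.pi) ^ (-(finrank ℝ E / 2 : ℝ)) *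
        (r ^ (finrank ℝ E - 1 : ℝ) * Real.exp (-(1 / 2) * r ^ 2) * f r) := by
    simp only [gaussianRadialDensity, smul_eq_mul, hdim, Real.rpow_natCast]
    ring
  rw [stdGaussian_eq_withDensity, integral_withDensity_eq_integral_toReal_smul
    (by fun_prop) (by simp)]
  simp only [ENNReal.toReal_ofReal (gaussianRadialDensity_nonneg _ _)]
  rw [integral_fun_norm_addHaar volume fun r ↦ gaussianRadialDensity (finrank ℝ E) r • f r,
    ← finrank_mul_volume_real_ball_mul_two_pi_rpow, integral_congr_ae (.of_forall radial),
    integral_const_mul, nsmul_eq_mul, smul_eq_mul]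
  ring

lemma integral_norm_rpow_stdGaussian [Nontrivial E] {p : ℝ} (hp : -finrank ℝ E < p) :
    ∫ x, ‖x‖ ^ p ∂stdGaussian E =
      2 ^ (p / 2) * Real.Gamma ((finrank ℝ E + p) / 2) / Real.Gamma (finrank ℝ E / 2) := by
  have radial_integral : ∫ r in Ioi (0 : ℝ),
      r ^ (finrank ℝ E - 1 : ℝ) * Real.exp (-(1 / 2) * r ^ 2) * r ^ p =
        2 ^ ((finrank ℝ E + p) / 2) * (1 / 2) * Real.Gamma ((finrank ℝ E + p) / 2) := by
    calc ∫ r in Ioi (0 : ℝ), r ^ (finrank ℝ E - 1 : ℝ) * Real.exp (-(1 / 2) * r ^ 2) * r ^ p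
      _ = ∫ r in Ioi (0 : ℝ),
          r ^ (finrank ℝ E + p - 1 : ℝ) * Real.exp (-(1 / 2) * r ^ (2 : ℝ)) := by
          refine setIntegral_congr_fun measurableSet_Ioi fun r hr ↦ ?_
          simp only [Real.rpow_two]
          rw [mul_right_comm, ← Real.rpow_add hr, add_sub_right_comm]
      _ = 2 ^ ((finrank ℝ E + p) / 2) * (1 / 2) * Real.Gamma ((finrank ℝ E + p) / 2) := by
          rw [integral_rpow_mul_exp_neg_mul_rpow two_pos (by linarith) (by norm_num),
            sub_add_cancel, neg_div, one_div, Real.inv_rpow two_pos.le, Real.rpow_neg two_pos.le,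
            inv_inv]
  rw [integral_comp_norm_stdGaussian (· ^ p), radial_integral, add_div _ p,
    Real.rpow_add two_pos]
  field_simp

lemma integral_abs_rpow_gaussianReal {p : ℝ} (hp : -1 < p) :
    ∫ x, |x| ^ p ∂gaussianReal 0 1 = 2 ^ (p / 2) * Real.Gamma ((p + 1) / 2) / √Real.pi := by
  simpa [stdGaussian_real, ← Real.Gamma_one_half_eq, add_comm] using
    integral_norm_rpow_stdGaussian (E := ℝ) (p := p) (by simpa using hp)

lemma indepFun_normalize_norm_stdGaussian [Nontrivial E] :
    IndepFun NormedSpace.normalize norm (stdGaussian E) := by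
  have := isProbabilityMeasure_stdGaussian (E := E)
  rw [stdGaussian_eq_withDensity] at this ⊢
  exact indepFun_normalize_norm_withDensity volume
    (φ := fun r ↦ ENNReal.ofReal (gaussianRadialDensity (finrank ℝ E) r)) (by fun_prop)

lemma map_inner_stdGaussian {u : E} (hu : ‖u‖ = 1) :
    (stdGaussian E).map (fun x ↦ ⟪u, x⟫) = gaussianReal 0 1 := by
  have := IsGaussian.map_eq_gaussianReal (μ := stdGaussian E) (innerSL ℝ u)
  rw [integral_strongDual_stdGaussian, variance_dual_stdGaussian] at this
  simpa [hu] using this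

lemma integral_abs_inner_normalize_rpow_stdGaussian {u : E} (hu : ‖u‖ = 1) {p : ℝ} (hp : -1 < p) :
    ∫ x, |⟪u, NormedSpace.normalize x⟫| ^ p ∂stdGaussian E =
      Real.Gamma ((p + 1) / 2) * Real.Gamma (finrank ℝ E / 2) /
        (√Real.pi * Real.Gamma ((finrank ℝ E + p) / 2)) := by
  have : Nontrivial E := ⟨u, 0, by rintro rfl; simp at hu⟩
  have hdim : (1 : ℝ) ≤ finrank ℝ E := by exact_mod_cast finrank_pos (R := ℝ) (M := E)
  have factor (x : E) :
      |⟪u, x⟫| ^ p = |⟪u, NormedSpace.normalize x⟫| ^ p * ‖x‖ ^ p := by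
    rw [← Real.mul_rpow (abs_nonneg _) (norm_nonneg _), ← abs_of_nonneg (norm_nonneg x), ← abs_mul,
      mul_comm, ← real_inner_smul_right, NormedSpace.norm_smul_normalize]
  have moments : ∫ x, |x| ^ p ∂gaussianReal 0 1 =
      (∫ x, |⟪u, NormedSpace.normalize x⟫| ^ p ∂stdGaussian E) * ∫ x, ‖x‖ ^ p ∂stdGaussian E := by
    rw [← map_inner_stdGaussian hu, integral_map (by fun_prop)
      (Measurable.aestronglyMeasurable (by fun_prop)), integral_congr_ae (.of_forall factor)]
    exact indepFun_normalize_norm_stdGaussian.integral_fun_comp_mul_comp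
      (f := fun v : E ↦ |⟪u, v⟫| ^ p) (g := fun r : ℝ ↦ r ^ p)
      measurable_normalize.aemeasurable (by fun_prop)
      (Measurable.aestronglyMeasurable (by fun_prop))
      (Measurable.aestronglyMeasurable (by fun_prop))
  rw [integral_abs_rpow_gaussianReal hp, integral_norm_rpow_stdGaussian (by linarith)] at moments
  have := Real.Gamma_pos_of_pos (s := (finrank ℝ E + p) / 2) (by linarith)
  have := Real.Gamma_pos_of_pos (s := (finrank ℝ E : ℝ) / 2) (by linarith)
  field_simp at moments ⊢
  linarith

end Gaussian

noncomputable section AdamUpdate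

/-- The update at time `j` of Adam with zero momentum and zero `ε`: the gradient `g j` divided by
the root mean square of all gradients. It is `0` when all gradients vanish. -/
def adamUpdate {ι : Type*} [Fintype ι] (g : ι → ℝ) (j : ι) : ℝ :=
  g j / √(1 / (Fintype.card ι : ℝ) * ∑ i, g i ^ 2)

variable {ι : Type*} [Fintype ι]

lemma adamUpdate_eq_sqrt_card_mul_inner (g : ι → ℝ) (j : ι) :
    adamUpdate g j = √(Fintype.card ι) *
      ⟪EuclideanSpace.basisFun ι ℝ j, NormedSpace.normalize (WithLp.toLp 2 g)⟫ := by
  have hcoord : ⟪EuclideanSpace.basisFun ι ℝ j, NormedSpace.normalize (WithLp.toLp 2 g)⟫ =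
      g j / √(∑ i, g i ^ 2) := by
    simp [NormedSpace.normalize, EuclideanSpace.norm_eq, div_eq_inv_mul]
  rw [hcoord, adamUpdate, Real.sqrt_mul (by positivity), one_div, Real.sqrt_inv, ← div_div,
    div_inv_eq_mul]
  ring

variable {Ω : Type*} [MeasurableSpace Ω] {P : Measure Ω} {X : ι → Ω → ℝ}

lemma hasLaw_toLp_stdGaussian (hindep : iIndepFun X P)
    (hX : ∀ i, HasLaw (X i) (gaussianReal 0 1) P) :
    HasLaw (fun ω ↦ WithLp.toLp 2 (X · ω)) (stdGaussian (EuclideanSpace ℝ ι)) P :=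
  HasLaw.comp ⟨by fun_prop, map_pi_eq_stdGaussian⟩ (hindep.hasLaw_pi hX)

lemma integral_abs_adamUpdate_rpow (hindep : iIndepFun X P)
    (hX : ∀ i, HasLaw (X i) (gaussianReal 0 1) P) (j : ι) {p : ℝ} (hp : -1 < p) :
    ∫ ω, |adamUpdate (X · ω) j| ^ p ∂P =
      √(Fintype.card ι) ^ p * (Real.Gamma ((p + 1) / 2) * Real.Gamma (Fintype.card ι / 2) /
        (√Real.pi * Real.Gamma ((Fintype.card ι + p) / 2))) := by
  simp_rw [adamUpdate_eq_sqrt_card_mul_inner, abs_mul, abs_of_nonneg (Real.sqrt_nonneg _),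
    Real.mul_rpow (Real.sqrt_nonneg _) (abs_nonneg _), integral_const_mul]
  have transfer := (hasLaw_toLp_stdGaussian hindep hX).integral_comp
    (f := fun x ↦ |⟪EuclideanSpace.basisFun ι ℝ j, NormedSpace.normalize x⟫| ^ p) <|
    ((measurable_normalize.const_inner).abs.pow_const p).aestronglyMeasurable
  rw [Function.comp_def] at transfer
  rw [transfer, integral_abs_inner_normalize_rpow_stdGaussian (by simp) hp, finrank_euclideanSpace]

lemma integral_abs_adamUpdate (hindep : iIndepFun X P)
    (hX : ∀ i, HasLaw (X i) (gaussianReal 0 1) P) (j : ι) (hcard : 1 < Fintype.card ι) :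
    ∫ ω, |adamUpdate (X · ω) j| ∂P = 2 * √(Fintype.card ι) * Real.Gamma (Fintype.card ι / 2) /
      (√Real.pi * (Fintype.card ι - 1) * Real.Gamma ((Fintype.card ι - 1) / 2)) := by
  have hn : (1 : ℝ) < Fintype.card ι := by exact_mod_cast hcard
  have gamma_step : Real.Gamma ((Fintype.card ι + 1) / 2) =
      (Fintype.card ι - 1) / 2 * Real.Gamma ((Fintype.card ι - 1) / 2) := by
    rw [← Real.Gamma_add_one (by linarith)]
    ring_nf
  have moment := integral_abs_adamUpdate_rpow hindep hX j (p := 1) (by norm_num)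
  simp only [Real.rpow_one, one_add_one_eq_two, div_self, ne_eq, OfNat.ofNat_ne_zero,
    not_false_eq_true, Real.Gamma_one, gamma_step] at moment
  rw [moment]
  field_simp

lemma integral_adamUpdate_sq (hindep : iIndepFun X P)
    (hX : ∀ i, HasLaw (X i) (gaussianReal 0 1) P) (j : ι) :
    ∫ ω, adamUpdate (X · ω) j ^ 2 ∂P = 1 := by
  have hn : (0 : ℝ) < Fintype.card ι := by exact_mod_cast Fintype.card_pos_iff.2 ⟨j⟩
  have moment := integral_abs_adamUpdate_rpow hindep hX j (p := 2) (by norm_num)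
  have := Real.Gamma_pos_of_pos (half_pos hn)
  simp only [Real.rpow_two, sq_abs, Real.sq_sqrt hn.le] at moment
  rw [moment, show ((2 : ℝ) + 1) / 2 = 1 / 2 + 1 by norm_num, add_div _ _ (2 : ℝ),
    div_self two_ne_zero, Real.Gamma_add_one (by norm_num), Real.Gamma_add_one (by positivity),
    Real.Gamma_one_half_eq]
  field_simp

lemma variance_abs_adamUpdate (hindep : iIndepFun X P)
    (hX : ∀ i, HasLaw (X i) (gaussianReal 0 1) P) (j : ι) :
    Var[fun ω ↦ |adamUpdate (X · ω) j|; P] = 1 - (∫ ω, |adamUpdate (X · ω) j| ∂P) ^ 2 := by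
  have := hindep.isProbabilityMeasure
  have hX' i := (hX i).aemeasurable
  have second_moment := integral_adamUpdate_sq hindep hX j
  have hmeas : AEStronglyMeasurable (fun ω ↦ adamUpdate (X · ω) j) P := by
    unfold adamUpdate
    exact AEMeasurable.aestronglyMeasurable (by fun_prop)
  have hL2 : MemLp (fun ω ↦ adamUpdate (X · ω) j) 2 P := by
    refine (memLp_two_iff_integrable_sq hmeas).2 (.of_integral_ne_zero ?_)
    rw [second_moment]
    exact one_ne_zero
  rw [variance_eq_sub (X := fun ω ↦ |adamUpdate (X · ω) j|) hL2.abs]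
  simp only [Pi.pow_apply, sq_abs, second_moment]

end AdamUpdate

/-- If `X 0, …, X (m-1)` (representing `X_1, …, X_m`) are i.i.d. standard
normal random variables with `m ≥ 2` and `T_m = X_m / √((1/m) ∑_{i=1}^m X_i²)`, then
`E[|T_m|] = 2 √m Γ(m/2) / (√π (m-1) Γ((m-1)/2))` and consequently
`Var[|T_m|] = 1 - 4 m Γ(m/2)² / ((m-1)² π Γ((m-1)/2)²)`. -/
theorem adam_update_abs_mean_and_variance
    {Ω : Type*} [MeasureSpace Ω] [IsProbabilityMeasure (ℙ : Measure Ω)]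
    (m : ℕ) (hm : 2 ≤ m)
    (X : Fin m → Ω → ℝ) (hmeas : ∀ i, Measurable (X i))
    (hindep : iIndepFun X ℙ)
    (hdist : ∀ i, Measure.map (X i) ℙ = gaussianReal 0 1)
    (T : Ω → ℝ)
    (hT : ∀ ω, T ω =
      X ⟨m - 1, by omega⟩ ω / Real.sqrt ((1 / (m : ℝ)) * ∑ i : Fin m, X i ω ^ 2)) :
    (∫ ω, |T ω| ∂ℙ =
        2 * Real.sqrt m * Real.Gamma ((m : ℝ) / 2) /
          (Real.sqrt Real.pi * ((m : ℝ) - 1) * Real.Gamma (((m : ℝ) - 1) / 2))) ∧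
      variance (fun ω => |T ω|) ℙ =
        1 - 4 * m * Real.Gamma ((m : ℝ) / 2) ^ 2 /
          (((m : ℝ) - 1) ^ 2 * Real.pi * Real.Gamma (((m : ℝ) - 1) / 2) ^ 2) := by
  have hX i : HasLaw (X i) (gaussianReal 0 1) ℙ := ⟨(hmeas i).aemeasurable, hdist i⟩
  obtain rfl : T = fun ω ↦ adamUpdate (X · ω) ⟨m - 1, by omega⟩ :=
    funext fun ω ↦ by rw [hT, adamUpdate, Fintype.card_fin]
  have mean := integral_abs_adamUpdate hindep hX ⟨m - 1, by omega⟩ (by rwa [Fintype.card_fin])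
  rw [Fintype.card_fin] at mean
  refine ⟨mean, ?_⟩
  rw [variance_abs_adamUpdate hindep hX, mean]
  simp only [div_pow, mul_pow, Real.sq_sqrt m.cast_nonneg, Real.sq_sqrt Real.pi_pos.le]
  ring
end
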